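/- The family of elements e(Y₁+Y₂)^{a₁}(Y₁Y₂)^{a₂}(t⁻²Y₁X₁+Y₂X₂)^{ε}(X₁+X₂)^{b₁}(X₁X₂)^{b₂}e, with ε ∈ {0,1}, a₁, b₁ ∈ ℕ₀ and a₂, b₂ ∈ ℤ (negative exponents interpreted via the inverse generators), is linearly independent over ℂ in H_{t,q}. -/

import Mathlib

noncomputable section

/-- Generators of the double affine Hecke algebra of type GL₂:
`T, T⁻¹, X₁, X₁⁻¹, X₂, X₂⁻¹, Y₁, Y₁⁻¹, Y₂, Y₂⁻¹`. -/
inductive DGen : Type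
  | T | Ti | X1 | X1i | X2 | X2i | Y1 | Y1i | Y2 | Y2i

abbrev FD : Type := FreeAlgebra ℂ DGen

def gD : DGen → FD := FreeAlgebra.ι ℂ

/-- The defining relations of the double affine Hecke algebra `H_{t,q}` of type GL₂. -/
inductive DRel (q t : ℂ) : FD → FD → Prop
  | TTi : DRel q t (gD .T * gD .Ti) 1
  | TiT : DRel q t (gD .Ti * gD .T) 1
  | X1X1i : DRel q t (gD .X1 * gD .X1i) 1
  | X1iX1 : DRel q t (gD .X1i * gD .X1) 1
  | X2X2i : DRel q t (gD .X2 * gD .X2i) 1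
  | X2iX2 : DRel q t (gD .X2i * gD .X2) 1
  | Y1Y1i : DRel q t (gD .Y1 * gD .Y1i) 1
  | Y1iY1 : DRel q t (gD .Y1i * gD .Y1) 1
  | Y2Y2i : DRel q t (gD .Y2 * gD .Y2i) 1
  | Y2iY2 : DRel q t (gD .Y2i * gD .Y2) 1
  | TX1T : DRel q t (gD .T * gD .X1 * gD .T) (gD .X2)
  | TiY1Ti : DRel q t (gD .Ti * gD .Y1 * gD .Ti) (gD .Y2)
  | Xcomm : DRel q t (gD .X1 * gD .X2) (gD .X2 * gD .X1)
  | Ycomm : DRel q t (gD .Y1 * gD .Y2) (gD .Y2 * gD .Y1)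
  | YXX : DRel q t (gD .Y1 * (gD .X1 * gD .X2)) ((q ^ 2) • (gD .X1 * gD .X2 * gD .Y1))
  | X1iY2 : DRel q t (gD .X1i * gD .Y2) (gD .Y2 * gD .X1i * gD .Ti * gD .Ti)
  | hecke : DRel q t ((gD .T + algebraMap ℂ FD t⁻¹) * (gD .T - algebraMap ℂ FD t)) 0

/-- The double affine Hecke algebra `H_{t,q}` of type GL₂. -/
abbrev DAHA (q t : ℂ) : Type := RingQuot (DRel q t)

variable (q t : ℂ)

def T : DAHA q t := RingQuot.mkAlgHom ℂ (DRel q t) (gD .T)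
def Ti : DAHA q t := RingQuot.mkAlgHom ℂ (DRel q t) (gD .Ti)
def X1 : DAHA q t := RingQuot.mkAlgHom ℂ (DRel q t) (gD .X1)
def X1i : DAHA q t := RingQuot.mkAlgHom ℂ (DRel q t) (gD .X1i)
def X2 : DAHA q t := RingQuot.mkAlgHom ℂ (DRel q t) (gD .X2)
def X2i : DAHA q t := RingQuot.mkAlgHom ℂ (DRel q t) (gD .X2i)
def Y1 : DAHA q t := RingQuot.mkAlgHom ℂ (DRel q t) (gD .Y1)
def Y1i : DAHA q t := RingQuot.mkAlgHom ℂ (DRel q t) (gD .Y1i)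
def Y2 : DAHA q t := RingQuot.mkAlgHom ℂ (DRel q t) (gD .Y2)
def Y2i : DAHA q t := RingQuot.mkAlgHom ℂ (DRel q t) (gD .Y2i)

/-- Integer powers of an element `x` with designated inverse `xi`:
negative exponents are interpreted via the inverse generator. -/
def zp {M : Type*} [Monoid M] (x xi : M) : ℤ → M
  | Int.ofNat n => x ^ n
  | Int.negSucc n => xi ^ (n + 1)

/-- The symmetrizing idempotent `e = (1 + tT)/(1 + t²)` of the DAHA. -/
def eSym (q t : ℂ) : DAHA q t := ((1 + t ^ 2)⁻¹ : ℂ) • (1 + t • T q t)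

/-- The family `e(Y₁+Y₂)^{a₁}(Y₁Y₂)^{a₂}(t⁻²Y₁X₁+Y₂X₂)^{ε}(X₁+X₂)^{b₁}(X₁X₂)^{b₂}e`,
indexed by `a₁, b₁ ∈ ℕ`, `a₂, b₂ ∈ ℤ`, `ε ∈ {0,1}`. -/
def pbwSph (q t : ℂ) : ℕ × ℤ × Fin 2 × ℕ × ℤ → DAHA q t :=
  fun x => eSym q t *
    ((Y1 q t + Y2 q t) ^ x.1 * zp (Y1 q t * Y2 q t) (Y1i q t * Y2i q t) x.2.1 *
      ((t⁻¹ ^ 2) • (Y1 q t * X1 q t) + Y2 q t * X2 q t) ^ (x.2.2.1 : ℕ) *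
      (X1 q t + X2 q t) ^ x.2.2.2.1 * zp (X1 q t * X2 q t) (X1i q t * X2i q t) x.2.2.2.2) *
    eSym q t

/-! A representation of `H_{t,q}` on functions `ℤ × ℤ × Bool → K` separates the family: it is the
difference-reflection representation by Demazure–Lusztig operators, restricted to the orbit of a
point `(x, y)` whose coordinates are generic in an extension field `K` of `ℂ`. Set `π = T⁻¹ Y₁` and
`S = t⁻¹ + T`, a multiple of `e`. Since `e` commutes with symmetric elements, the given elements
equal `π^{2a₂} (S π)^{a₁} (q² S X₂ π)^ε (X₁ + X₂)^{b₁} (X₁ X₂)^{b₂} e`. Apply this to the indicator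
of the pair of points over `(x, y)`: the `X`-part acts by a scalar, each factor `S π` or `S X₂ π`
enlarges the support by one step in a fixed direction, and `π²` translates it. The extremal value
occurs at a position determined by `(a₁ + ε, a₂)` and is a nonzero multiple, depending only on that
pair, of `x^ε (x + y)^{b₁} (x y)^{b₂}`. The family is therefore block triangular with respect to
`a₁ + ε`, and within a block independence is that of these monomials. -/

section LinearIndependence

theorem linearIndependent_of_valuation_injective {A B Γ ι : Type*} [CommRing A] [Ring B]
    [Algebra A B] [LinearOrderedCommGroupWithZero Γ] (v : Valuation B Γ) [hv : v.IsTrivialOn A]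
    {f : ι → B} (hf : Function.Injective fun i => v (f i)) (hf₀ : ∀ i, v (f i) ≠ 0) :
    LinearIndependent A f := by
  classical
  refine linearIndependent_iff.2 fun l hl => ?_
  by_contra hne
  have hterm : ∀ i ∈ l.support, v (l i • f i) = v (f i) := fun i hi => by
    rw [Algebra.smul_def, map_mul, hv.eq_one _ (Finsupp.mem_support_iff.1 hi), one_mul]
  obtain ⟨j, hj, hmax⟩ := Finset.exists_max_image l.support (fun i => v (f i))
    (Finsupp.support_nonempty_iff.2 hne)
  have hdom : ∀ i ∈ l.support \ {j}, v (l i • f i) < v (l j • f j) := fun i hi => by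
    obtain ⟨hi, hij⟩ := Finset.mem_sdiff.1 hi
    rw [hterm i hi, hterm j hj]
    exact (hmax i hi).lt_of_ne (hf.ne (Finset.notMem_singleton.1 hij))
  have hsum := v.map_sum_eq_of_lt hj hdom
  rw [Finsupp.linearCombination_apply, Finsupp.sum] at hl
  rw [hl, map_zero, hterm j hj] at hsum
  exact hf₀ j hsum.symm

theorem linearIndependent_of_blockTriangular {R V W ι κ α : Type*} [Ring R] [AddCommGroup V]
    [AddCommGroup W] [Module R V] [Module R W] [LinearOrder α] {v : ι → V} (key : ι → κ)
    (deg : κ → α) (φ : κ → V →ₗ[R] W)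
    (htri : ∀ i k, deg (key i) ≤ deg k → key i ≠ k → φ k (v i) = 0)
    (hblock : ∀ k, LinearIndepOn R (fun i => φ k (v i)) {i | key i = k}) :
    LinearIndependent R v := by
  classical
  refine linearIndependent_iff.2 fun l hl => ?_
  by_contra hne
  obtain ⟨j, hj, hmax⟩ := Finset.exists_max_image l.support (fun i => deg (key i))
    (Finsupp.support_nonempty_iff.2 hne)
  have hzero : ∑ i ∈ l.support with key i = key j, l i • φ (key j) (v i) = 0 := by
    rw [Finset.sum_filter_of_ne, ← map_zero (φ (key j)), ← hl, Finsupp.linearCombination_apply,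
      Finsupp.sum, map_sum]
    · simp only [map_smul]
    · intro i hi
      contrapose!
      intro hij
      rw [htri i _ (hmax i hi) hij, smul_zero]
  refine Finsupp.mem_support_iff.1 hj (linearIndepOn_iff'.1 (hblock (key j)) _ l ?_ hzero j ?_)
  · exact fun i hi => (Finset.mem_filter.1 hi).2
  · exact Finset.mem_filter.2 ⟨hj, rfl⟩

end LinearIndependence

section GenericPair

/-- The monomial `x^ε (x + y)^b (x y)^n`, indexed by `(ε, b, n)`. -/
def mixedMonomial {K : Type*} [Field K] (x y : K) (u : Fin 2 × ℕ × ℤ) : K :=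
  x ^ (u.1 : ℕ) * (x + y) ^ u.2.1 * (x * y) ^ u.2.2

theorem linearIndependent_mixedMonomial {k L K Γ Δ : Type*} [Field k] [Field L] [Field K]
    [Algebra k L] [Algebra L K] [Algebra k K] [IsScalarTower k L K]
    [LinearOrderedCommGroupWithZero Γ] [LinearOrderedCommGroupWithZero Δ]
    (w : Valuation L Δ) [w.IsTrivialOn k] (v : Valuation K Γ) [hv : v.IsTrivialOn L]
    {s : L} (hs : 1 < w s) {x y : K} (hx : 1 < v x) (hxy : x + y = algebraMap L K s) :
    LinearIndependent k (mixedMonomial x y) := by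
  have hpow : LinearIndependent k fun b : ℕ => s ^ b := by
    refine linearIndependent_of_valuation_injective w ?_ fun b => ?_
    · simpa only [map_pow] using! pow_right_injective₀ (zero_lt_one.trans hs) hs.ne'
    · exact (map_pow w s b).trans_ne (pow_ne_zero b (zero_lt_one.trans hs).ne')
  have hvy : v y = v x := by
    have hvs : v (algebraMap L K s) = 1 := hv.eq_one s (by rintro rfl; simp at hs)
    rw [eq_sub_of_add_eq' hxy]
    exact v.map_sub_eq_of_lt_right (hvs.trans_lt hx)
  have hvx : ∀ c : Fin 2 × ℤ, v (x ^ (c.1 : ℕ) * (x * y) ^ c.2) = v x ^ ((c.1 : ℤ) + 2 * c.2) := by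
    intro c
    have hx₀ : v x ≠ 0 := (zero_lt_one.trans hx).ne'
    rw [map_mul, map_pow, map_zpow₀, map_mul, hvy, zpow_add₀ hx₀, zpow_mul, zpow_natCast,
      zpow_ofNat, pow_two]
  have hzpow : LinearIndependent L fun c : Fin 2 × ℤ => x ^ (c.1 : ℕ) * (x * y) ^ c.2 := by
    refine linearIndependent_of_valuation_injective v (fun c d hcd => ?_) fun c => ?_
    · simp only [hvx] at hcd
      have := zpow_right_injective₀ (zero_lt_one.trans hx) hx.ne' hcd
      have := c.1.isLt
      have := d.1.isLt
      exact Prod.ext (Fin.ext (by omega)) (by omega)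
    · rw [hvx]
      exact zpow_ne_zero _ (zero_lt_one.trans hx).ne'
  have hmul := (linearIndependent_smul hpow hzpow).comp
    (fun u : Fin 2 × ℕ × ℤ => (u.2.1, u.1, u.2.2)) fun u u' h => by
      simp only [Prod.mk.injEq] at h
      exact Prod.ext h.2.1 (Prod.ext h.1 h.2.2)
  convert! hmul using 1
  ext u
  simp only [mixedMonomial, Function.comp_apply, hxy, Algebra.smul_def, map_pow]
  ring

theorem exists_linearIndependent_mixedMonomial.{u} (k : Type u) [Field k] :
    ∃ (K : Type u) (_ : Field K) (_ : Algebra k K) (x y : K),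
      LinearIndependent k (mixedMonomial x y) := by
  classical
  have h : (1 : WithZero (Multiplicative ℤ)) < WithZero.exp 1 := by
    rw [← WithZero.exp_zero, WithZero.exp_lt_exp]
    exact zero_lt_one
  refine ⟨RatFunc (RatFunc k), inferInstance, inferInstance, RatFunc.X,
    (RatFunc.C (RatFunc.X : RatFunc k) : RatFunc (RatFunc k)) - RatFunc.X, ?_⟩
  exact linearIndependent_mixedMonomial (RatFunc.inftyValuation k)
    (RatFunc.inftyValuation (RatFunc k)) (s := RatFunc.X) (by rwa [RatFunc.inftyValuation.X])
    (by rwa [RatFunc.inftyValuation.X]) (by rw [add_sub_cancel, RatFunc.algebraMap_eq_C])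

theorem linearIndependent_pair_of_mixedMonomial {k K : Type*} [Field k] [Field K] [Algebra k K]
    {x y : K} (h : LinearIndependent k (mixedMonomial x y)) : LinearIndependent k ![x, y] := by
  rw [← LinearIndependent.pair_add_right_iff]
  convert! h.comp ![(1, 0, 0), (0, 1, 0)] (by decide) using 1
  ext i
  fin_cases i <;> simp [mixedMonomial]

end GenericPair

section ZPow

theorem zp_units {M : Type*} [Monoid M] (u : Mˣ) (n : ℤ) : zp (u : M) ↑u⁻¹ n = ↑(u ^ n) := by
  cases n with
  | ofNat n => simp [zp]
  | negSucc n => rw [zp, zpow_negSucc, ← inv_pow, Units.val_pow_eq_pow_val]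

theorem map_zp {M N F : Type*} [Monoid M] [Monoid N] [FunLike F M N] [MonoidHomClass F M N]
    (f : F) (x y : M) (n : ℤ) : f (zp x y n) = zp (f x) (f y) n := by
  cases n <;> simp only [zp, map_pow]

end ZPow

section QuadraticRelation

variable {A : Type*} [Ring A] [Algebra ℂ A] {t : ℂ} {a : A}

theorem mul_self_of_hecke (ht : t ≠ 0)
    (h : (a + algebraMap ℂ A t⁻¹) * (a - algebraMap ℂ A t) = 0) :
    a * a = 1 + (t - t⁻¹) • a := by
  rw [add_mul, mul_sub, mul_sub, ← map_mul, inv_mul_cancel₀ ht, map_one, ← Algebra.commutes,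
    ← Algebra.smul_def, ← Algebra.smul_def] at h
  rw [sub_smul]
  linear_combination (norm := module) h

/-- An element satisfying the quadratic Hecke relation, as a unit. -/
def unitOfHecke (ht : t ≠ 0) (a : A)
    (h : (a + algebraMap ℂ A t⁻¹) * (a - algebraMap ℂ A t) = 0) : Aˣ where
  val := a
  inv := a - (t - t⁻¹) • 1
  val_inv := by
    rw [mul_sub, mul_self_of_hecke ht h, mul_smul_comm, mul_one, add_sub_cancel_right]
  inv_val := by
    rw [sub_mul, mul_self_of_hecke ht h, smul_one_mul, add_sub_cancel_right]

end QuadraticRelation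

/-- Units `T`, `X₁`, `X₂`, `π` of a `ℂ`-algebra satisfying the relations of `H_{t,q}` in its
presentation with `π = T⁻¹ Y₁ = Y₂ T` in place of `Y₁` and `Y₂`. -/
structure DAHARealization (q t : ℂ) (A : Type*) [Ring A] [Algebra ℂ A] where
  T : Aˣ
  X₁ : Aˣ
  X₂ : Aˣ
  π : Aˣ
  hecke : ((T : A) + algebraMap ℂ A t⁻¹) * (T - algebraMap ℂ A t) = 0
  T_X₁_T : T * X₁ * T = X₂
  X₁_X₂ : Commute X₁ X₂
  π_X₂ : π * X₂ = X₁ * π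
  π_X₁ : (π * X₁ : A) = q ^ 2 • (X₂ * π : A)
  π_π_T : Commute (π * π) T

namespace DAHARealization

variable {q t : ℂ} {A : Type*} [Ring A] [Algebra ℂ A] (D : DAHARealization q t A)

section Lift

/-- The image of `Y₁` in a realization. -/
def Y₁ : Aˣ := D.T * D.π

/-- The image of `Y₂` in a realization. -/
def Y₂ : Aˣ := D.π * D.T⁻¹

/-- The images of the generators of `H_{t,q}` in a realization. -/
def gen : DGen → A
  | .T => D.T
  | .Ti => ↑D.T⁻¹
  | .X1 => D.X₁
  | .X1i => ↑D.X₁⁻¹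
  | .X2 => D.X₂
  | .X2i => ↑D.X₂⁻¹
  | .Y1 => D.Y₁
  | .Y1i => ↑D.Y₁⁻¹
  | .Y2 => D.Y₂
  | .Y2i => ↑D.Y₂⁻¹

theorem Y₁_mul_Y₂ : D.Y₁ * D.Y₂ = D.π * D.π := by
  rw [Y₁, Y₂, mul_assoc, ← mul_assoc D.π, D.π_π_T.inv_right.eq, mul_inv_cancel_left]

theorem Y₂_mul_Y₁ : D.Y₂ * D.Y₁ = D.π * D.π := by
  rw [Y₁, Y₂, mul_assoc, inv_mul_cancel_left]

theorem T_mul_X₁ : D.T * D.X₁ = D.X₂ * D.T⁻¹ :=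
  eq_mul_inv_of_mul_eq D.T_X₁_T

theorem X₁_mul_T : D.X₁ * D.T = D.T⁻¹ * D.X₂ :=
  eq_inv_mul_of_mul_eq ((mul_assoc _ _ _).symm.trans D.T_X₁_T)

theorem commute_T_X₁_mul_X₂ : Commute D.T (D.X₁ * D.X₂) :=
  calc D.T * (D.X₁ * D.X₂) = D.X₂ * (D.T⁻¹ * D.X₂) := by rw [← mul_assoc, T_mul_X₁, mul_assoc]
    _ = D.X₁ * D.X₂ * D.T := by rw [← X₁_mul_T, ← mul_assoc, D.X₁_X₂.eq]

theorem Y₁_mul_X₁_mul_X₂ : (D.Y₁ * (D.X₁ * D.X₂) : A) = q ^ 2 • (D.X₁ * D.X₂ * D.Y₁ : A) := by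
  have hπ : (D.π * (D.X₁ * D.X₂) : A) = q ^ 2 • (D.X₁ * D.X₂ * D.π : A) := by
    have h : (D.π * D.X₂ : A) = D.X₁ * D.π := mod_cast congrArg Units.val D.π_X₂
    have hX : (D.X₂ * D.X₁ : A) = D.X₁ * D.X₂ := mod_cast congrArg Units.val D.X₁_X₂.eq.symm
    rw [← mul_assoc, D.π_X₁, smul_mul_assoc, mul_assoc, h, ← mul_assoc, hX]
  have hT : (D.T * (D.X₁ * D.X₂) : A) = D.X₁ * D.X₂ * D.T :=
    mod_cast congrArg Units.val D.commute_T_X₁_mul_X₂.eq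
  rw [Y₁, Units.val_mul, mul_assoc, hπ, mul_smul_comm, ← mul_assoc, hT, mul_assoc, mul_assoc]

theorem X₁_inv_mul_Y₂ : D.X₁⁻¹ * D.Y₂ = D.Y₂ * D.X₁⁻¹ * D.T⁻¹ * D.T⁻¹ := by
  have hπ : D.X₁⁻¹ * D.π = D.π * D.X₂⁻¹ := by
    rw [inv_mul_eq_iff_eq_mul, ← mul_assoc, ← D.π_X₂, mul_inv_cancel_right]
  rw [Y₂, ← mul_assoc, hπ, ← D.T_X₁_T]
  group

theorem lift_gen_rel {x y : FD} (h : DRel q t x y) :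
    FreeAlgebra.lift ℂ D.gen x = FreeAlgebra.lift ℂ D.gen y := by
  cases h with
  | TX1T => simpa [gD, gen] using congrArg Units.val D.T_X₁_T
  | TiY1Ti => simp [gD, gen, Y₁, Y₂]
  | Xcomm => simpa [gD, gen] using congrArg Units.val D.X₁_X₂.eq
  | Ycomm => simpa [gD, gen] using congrArg Units.val (D.Y₁_mul_Y₂.trans D.Y₂_mul_Y₁.symm)
  | YXX => simpa [gD, gen] using D.Y₁_mul_X₁_mul_X₂
  | X1iY2 => simpa [gD, gen] using congrArg Units.val D.X₁_inv_mul_Y₂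
  | hecke => simpa [gD, gen] using D.hecke
  | _ => simp [gD, gen]

/-- The representation of `H_{t,q}` determined by a realization. -/
def lift : DAHA q t →ₐ[ℂ] A :=
  RingQuot.liftAlgHom ℂ ⟨FreeAlgebra.lift ℂ D.gen, fun _ _ => D.lift_gen_rel⟩

theorem lift_mk (g : DGen) : D.lift (RingQuot.mkAlgHom ℂ (DRel q t) (gD g)) = D.gen g := by
  simp [lift, gD]

end Lift

section Symmetrizer

theorem T_inv (ht : t ≠ 0) : (↑D.T⁻¹ : A) = D.T - (t - t⁻¹) • 1 := by
  refine Units.inv_eq_of_mul_eq_one_right ?_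
  rw [mul_sub, mul_self_of_hecke ht D.hecke, mul_smul_comm, mul_one, add_sub_cancel_right]

/-- The symmetrizer `t⁻¹ + T`, a scalar multiple of the image of the idempotent `e`. -/
def symm : A := t⁻¹ • 1 + D.T

theorem T_mul_symm (ht : t ≠ 0) : D.T * D.symm = t • D.symm := by
  rw [symm, mul_add, mul_self_of_hecke ht D.hecke, mul_smul_comm, mul_one, smul_add,
    smul_smul, mul_inv_cancel₀ ht]
  module

theorem commute_T_add_conj (ht : t ≠ 0) (a : A) :
    Commute (D.T : A) (a + ↑D.T⁻¹ * a * ↑D.T⁻¹) := by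
  rw [Commute, SemiconjBy]
  have h₁ : (D.T * (↑D.T⁻¹ * a * ↑D.T⁻¹) : A) = a * ↑D.T⁻¹ := by simp [mul_assoc]
  have h₂ : ((↑D.T⁻¹ * a * ↑D.T⁻¹) * D.T : A) = ↑D.T⁻¹ * a := by simp [mul_assoc]
  rw [mul_add, add_mul, h₁, h₂, D.T_inv ht]
  simp only [mul_sub, sub_mul, mul_smul_comm, smul_mul_assoc, mul_one, one_mul]
  abel

theorem commute_T_Y₁_add_Y₂ (ht : t ≠ 0) : Commute (D.T : A) (D.Y₁ + D.Y₂) := by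
  convert D.commute_T_add_conj ht (D.Y₁ : A) using 2
  simp [Y₁, Y₂]

theorem commute_T_X₁_add_X₂ (ht : t ≠ 0) : Commute (D.T : A) (D.X₁ + D.X₂) := by
  rw [add_comm]
  convert D.commute_T_add_conj ht (D.X₂ : A) using 2
  simp [← D.T_X₁_T, mul_assoc]

/-- The image of the idempotent `e = (1 + tT)/(1 + t²)`. -/
def e : A := D.lift (eSym q t)

theorem e_eq : D.e = (1 + t ^ 2)⁻¹ • (1 + t • (D.T : A)) := by
  rw [e, eSym, map_smul, map_add, map_one, map_smul, _root_.T, lift_mk, gen]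

theorem e_eq_smul_symm (ht : t ≠ 0) : D.e = ((1 + t ^ 2)⁻¹ * t) • D.symm := by
  rw [e_eq, symm, mul_smul, smul_add t, smul_smul t, mul_inv_cancel₀ ht, one_smul]

theorem symm_eq_smul_e (ht : t ≠ 0) (ht2 : t ^ 2 ≠ -1) : D.symm = (t⁻¹ + t) • D.e := by
  have h : 1 + t ^ 2 ≠ 0 := fun h => ht2 (eq_neg_of_add_eq_zero_right h)
  rw [D.e_eq_smul_symm ht, smul_smul]
  convert (one_smul ℂ D.symm).symm
  field_simp

theorem T_mul_e (ht : t ≠ 0) : D.T * D.e = t • D.e := by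
  rw [D.e_eq_smul_symm ht, mul_smul_comm, D.T_mul_symm ht, smul_comm]

theorem commute_e {a : A} (h : Commute (D.T : A) a) : Commute D.e a := by
  rw [e_eq]
  exact ((Commute.one_left a).add_left (h.smul_left t)).smul_left _

theorem T_inv_mul_e (ht : t ≠ 0) : ↑D.T⁻¹ * D.e = t⁻¹ • D.e := by
  rw [D.T_inv ht, sub_mul, D.T_mul_e ht, smul_one_mul]
  module

theorem e_mul_e (ht : t ≠ 0) (ht2 : t ^ 2 ≠ -1) : D.e * D.e = D.e := by
  have h : 1 + t ^ 2 ≠ 0 := fun h => ht2 (eq_neg_of_add_eq_zero_right h)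
  nth_rw 1 [e_eq]
  rw [smul_mul_assoc, add_mul, one_mul, smul_mul_assoc, D.T_mul_e ht, inv_smul_eq_iff₀ h]
  module

end Symmetrizer

section Spherical

theorem Y₁_add_Y₂_mul_e (ht : t ≠ 0) : (D.Y₁ + D.Y₂ : A) * D.e = D.symm * D.π * D.e := by
  rw [Y₁, Y₂, symm, Units.val_mul, Units.val_mul, add_mul, mul_assoc (D.π : A), D.T_inv_mul_e ht,
    mul_smul_comm, add_mul, add_mul, smul_one_mul, smul_mul_assoc, add_comm]

theorem Y₁_add_Y₂_pow_mul_e (ht : t ≠ 0) (n : ℕ) :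
    (D.Y₁ + D.Y₂ : A) ^ n * D.e = (D.symm * D.π) ^ n * D.e := by
  induction n with
  | zero => simp only [pow_zero]
  | succ n ih =>
    have h := (D.commute_e (D.commute_T_Y₁_add_Y₂ ht)).eq
    rw [pow_succ, mul_assoc, ← h, ← mul_assoc, ih, mul_assoc, h, D.Y₁_add_Y₂_mul_e ht, ← mul_assoc,
      pow_succ]

theorem e_mul_cross_mul_e (ht : t ≠ 0) (ht2 : t ^ 2 ≠ -1) :
    D.e * (t⁻¹ ^ 2 • (D.Y₁ * D.X₁ : A) + D.Y₂ * D.X₂) * D.e =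
      q ^ 2 • (D.symm * D.X₂ * D.π) * D.e := by
  have h₁ : (D.Y₁ * D.X₁ : A) = q ^ 2 • (D.T * (D.X₂ * D.π) : A) := by
    rw [Y₁, Units.val_mul, mul_assoc, D.π_X₁, mul_smul_comm]
  have h₂ : (D.Y₂ * D.X₂ : A) = q ^ 2 • (D.X₂ * D.π * D.T : A) := by
    have h : D.Y₂ * D.X₂ = D.π * D.X₁ * D.T := by rw [Y₂, mul_assoc, ← X₁_mul_T, mul_assoc]
    rw [← Units.val_mul, h, Units.val_mul, Units.val_mul, D.π_X₁, smul_mul_assoc]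
  have h₃ : D.e * (D.T * (D.X₂ * D.π)) = t • (D.e * (D.X₂ * D.π)) := by
    rw [← mul_assoc, (D.commute_e (Commute.refl _)).eq, D.T_mul_e ht, smul_mul_assoc]
  rw [h₁, h₂, D.symm_eq_smul_e ht ht2, mul_add, add_mul]
  simp only [mul_smul_comm, smul_mul_assoc, h₃]
  simp only [mul_assoc, D.T_mul_e ht, mul_smul_comm, smul_smul]
  rw [← add_smul]
  congr 1
  field_simp

theorem e_mul_cross_pow_mul_e (ht : t ≠ 0) (ht2 : t ^ 2 ≠ -1) (ε : Fin 2) :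
    D.e * (t⁻¹ ^ 2 • (D.Y₁ * D.X₁ : A) + D.Y₂ * D.X₂) ^ (ε : ℕ) * D.e =
      (q ^ 2 • (D.symm * D.X₂ * D.π : A)) ^ (ε : ℕ) * D.e := by
  fin_cases ε
  · simp only [pow_zero, mul_one, one_mul, D.e_mul_e ht ht2]
  · simp only [pow_one, D.e_mul_cross_mul_e ht ht2]

theorem lift_zp_X (n : ℤ) :
    D.lift (zp (X1 q t * X2 q t) (X1i q t * X2i q t) n) = ↑((D.X₁ * D.X₂) ^ n) := by
  rw [← zp_units, D.X₁_X₂.eq, mul_inv_rev, ← D.X₁_X₂.eq]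
  simp only [map_zp, map_mul, X1, X2, X1i, X2i, lift_mk, gen, Units.val_mul]

theorem lift_zp_Y (n : ℤ) :
    D.lift (zp (Y1 q t * Y2 q t) (Y1i q t * Y2i q t) n) = ↑((D.π * D.π) ^ n) := by
  rw [← zp_units, ← Y₂_mul_Y₁, mul_inv_rev, Y₂_mul_Y₁, ← Y₁_mul_Y₂]
  simp only [map_zp, map_mul, Y1, Y2, Y1i, Y2i, lift_mk, gen, Units.val_mul]

theorem commute_Y₁_add_Y₂_π_mul_π_zpow (n : ℤ) :
    Commute (D.Y₁ + D.Y₂ : A) ↑((D.π * D.π) ^ n) := by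
  have hπ : Commute D.π (D.π * D.π) := (Commute.refl _).mul_right (Commute.refl _)
  exact ((D.π_π_T.symm.mul_left hπ).zpow_right n).units_val.add_left
    ((hπ.mul_left D.π_π_T.symm.inv_left).zpow_right n).units_val

theorem lift_pbwSph (ht : t ≠ 0) (ht2 : t ^ 2 ≠ -1) (u : ℕ × ℤ × Fin 2 × ℕ × ℤ) :
    D.lift (pbwSph q t u) =
      ↑((D.π * D.π) ^ u.2.1) * (D.symm * D.π) ^ u.1 *
        (q ^ 2 • (D.symm * D.X₂ * D.π : A)) ^ (u.2.2.1 : ℕ) * (D.X₁ + D.X₂) ^ u.2.2.2.1 *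
          ↑((D.X₁ * D.X₂) ^ u.2.2.2.2) * D.e := by
  obtain ⟨a, m, ε, b, n⟩ := u
  set Z : A := t⁻¹ ^ 2 • (D.Y₁ * D.X₁ : A) + D.Y₂ * D.X₂
  set P : A := (D.Y₁ + D.Y₂) ^ a
  set Q : A := ↑((D.π * D.π) ^ m)
  set W : A := (D.X₁ + D.X₂) ^ b * ↑((D.X₁ * D.X₂) ^ n)
  have hlift : D.lift (pbwSph q t (a, m, ε, b, n)) =
      D.e * (P * Q * Z ^ (ε : ℕ) * W) * D.e := by
    simp only [pbwSph, map_mul, map_pow, map_add, map_smul, lift_zp_X, lift_zp_Y]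
    simp only [X1, X2, Y1, Y2, lift_mk, gen, e, mul_assoc, P, Q, Z, W]
  have hPQ : D.e * (P * Q) = Q * (P * D.e) := by
    have hP : Commute D.e P := (D.commute_e (D.commute_T_Y₁_add_Y₂ ht)).pow_right a
    have hQ : Commute D.e Q := D.commute_e (D.π_π_T.symm.zpow_right m).units_val
    rw [((D.commute_Y₁_add_Y₂_π_mul_π_zpow m).pow_left a).eq, (hQ.mul_right hP).eq, mul_assoc]
  have hW : D.e * (W * D.e) = W * D.e := by
    have h : Commute D.e W := .mul_right ((D.commute_e (D.commute_T_X₁_add_X₂ ht)).pow_right b)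
      (D.commute_e (D.commute_T_X₁_mul_X₂.zpow_right n).units_val)
    rw [← mul_assoc, h.eq, mul_assoc, D.e_mul_e ht ht2]
  calc D.lift (pbwSph q t (a, m, ε, b, n))
      = D.e * (P * Q) * Z ^ (ε : ℕ) * (W * D.e) := by rw [hlift]; simp only [mul_assoc]
    _ = Q * (D.symm * D.π) ^ a * (D.e * Z ^ (ε : ℕ) * D.e) * (W * D.e) := by
      rw [hPQ, D.Y₁_add_Y₂_pow_mul_e ht, ← hW]; simp only [mul_assoc, hW]
    _ = Q * (D.symm * D.π) ^ a * (q ^ 2 • (D.symm * D.X₂ * D.π : A)) ^ (ε : ℕ) * W * D.e := by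
      rw [D.e_mul_cross_pow_mul_e ht ht2, mul_assoc _ _ (W * D.e), mul_assoc _ D.e, hW]
      simp only [mul_assoc]
    _ = _ := by simp only [W, Q, mul_assoc]

end Spherical

end DAHARealization

/-- A set of points carrying the combinatorics of an orbit of the extended affine Weyl group of
`GL₂` in the torus `Kˣ × Kˣ`: `p` lies over `(coord p, coord (swap p))`, and `rot` lies over
`(x, y) ↦ (q² y, x)`. The points are required to lie off the diagonal. -/
structure RegularOrbit (q : ℂ) (K Ω : Type*) [Field K] [Algebra ℂ K] where
  coord : Ω → Kˣ
  swap : Ω → Ω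
  rot : Equiv.Perm Ω
  swap_swap : ∀ p, swap (swap p) = p
  rot_rot_swap : ∀ p, rot (rot (swap p)) = swap (rot (rot p))
  coord_rot : ∀ p, (coord (rot p) : K) = q ^ 2 • (coord (swap p) : K)
  coord_swap_rot : ∀ p, coord (swap (rot p)) = coord p
  coord_ne_coord_swap : ∀ p, coord p ≠ coord (swap p)

namespace RegularOrbit

variable {q : ℂ} {K Ω : Type*} [Field K] [Algebra ℂ K] (O : RegularOrbit q K Ω) (t : ℂ)

section Coefficient

/-- The coefficient `(t x₁ - t⁻¹ x₂) / (x₁ - x₂)` of the Demazure–Lusztig operator at a point. -/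
def coeff (p : Ω) : K :=
  (t • (O.coord p : K) - t⁻¹ • (O.coord (O.swap p) : K)) / (O.coord p - O.coord (O.swap p))

theorem coord_sub_coord_swap_ne_zero (p : Ω) : (O.coord p - O.coord (O.swap p) : K) ≠ 0 :=
  sub_ne_zero.2 fun h => O.coord_ne_coord_swap p (Units.ext h)

theorem coord_rot_rot (p : Ω) : (O.coord (O.rot (O.rot p)) : K) = q ^ 2 • (O.coord p : K) := by
  rw [coord_rot, coord_swap_rot]

theorem coeff_add_coeff_swap (p : Ω) :
    O.coeff t p + O.coeff t (O.swap p) = algebraMap ℂ K (t + t⁻¹) := by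
  have h := O.coord_sub_coord_swap_ne_zero p
  have h' := O.coord_sub_coord_swap_ne_zero (O.swap p)
  rw [coeff, coeff]
  rw [O.swap_swap] at h' ⊢
  simp only [Algebra.smul_def, map_add]
  field_simp
  ring

theorem coord_mul_coeff_add (p : Ω) :
    O.coord p * O.coeff t p + O.coord (O.swap p) * O.coeff t (O.swap p) =
      t • (O.coord p + O.coord (O.swap p) : K) := by
  have h := O.coord_sub_coord_swap_ne_zero p
  have h' := O.coord_sub_coord_swap_ne_zero (O.swap p)
  rw [coeff, coeff]
  rw [O.swap_swap] at h' ⊢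
  simp only [Algebra.smul_def]
  field_simp
  ring

theorem coeff_rot_rot (p : Ω) : O.coeff t (O.rot (O.rot p)) = O.coeff t p := by
  have hq : algebraMap ℂ K (q ^ 2) ≠ 0 := by
    refine left_ne_zero_of_mul (b := (O.coord p : K)) ?_
    rw [← Algebra.smul_def, ← coord_rot_rot]
    exact Units.ne_zero _
  rw [coeff, ← rot_rot_swap, coord_rot_rot, coord_rot_rot, smul_comm t, smul_comm t⁻¹, ← smul_sub,
    ← smul_sub, Algebra.smul_def, Algebra.smul_def (q ^ 2), mul_div_mul_left _ _ hq, coeff]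

end Coefficient

section Operators

/-- Multiplication by invertible functions. -/
def mulUnit : (Ω → Kˣ) →* (Module.End ℂ (Ω → K))ˣ :=
  (Units.map (Algebra.lmul ℂ (Ω → K) : (Ω → K) →* Module.End ℂ (Ω → K))).comp
    (MulEquiv.piUnits (M := fun _ : Ω => K)).symm.toMonoidHom

theorem mulUnit_apply (u : Ω → Kˣ) (F : Ω → K) (p : Ω) :
    (mulUnit u : Module.End ℂ (Ω → K)) F p = u p * F p :=
  rfl

/-- Composition with `rot`. -/
def compRot : (Module.End ℂ (Ω → K))ˣ :=
  LinearMap.GeneralLinearGroup.ofLinearEquiv (LinearEquiv.funCongrLeft ℂ K O.rot)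

theorem compRot_apply (F : Ω → K) (p : Ω) :
    (O.compRot : Module.End ℂ (Ω → K)) F p = F (O.rot p) :=
  rfl

/-- The Demazure–Lusztig operator `t + c (s - 1)`. -/
def demazureLusztig : Module.End ℂ (Ω → K) :=
  t • 1 + Algebra.lmul ℂ (Ω → K) (O.coeff t) * (LinearMap.funLeft ℂ K O.swap - 1)

theorem demazureLusztig_apply (F : Ω → K) (p : Ω) :
    O.demazureLusztig t F p = t • F p + O.coeff t p * (F (O.swap p) - F p) :=
  rfl

theorem hecke_demazureLusztig :
    (O.demazureLusztig t + algebraMap ℂ (Module.End ℂ (Ω → K)) t⁻¹) *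
      (O.demazureLusztig t - algebraMap ℂ (Module.End ℂ (Ω → K)) t) = 0 := by
  ext F p
  have h := O.coeff_add_coeff_swap t p
  rw [map_add] at h
  simp only [Module.End.mul_apply, LinearMap.add_apply, LinearMap.sub_apply, Pi.add_apply,
    Pi.sub_apply, Module.algebraMap_end_apply, Pi.smul_apply, demazureLusztig_apply, O.swap_swap,
    LinearMap.zero_apply, Pi.zero_apply]
  simp only [Algebra.smul_def]
  linear_combination - O.coeff t p * (F (O.swap p) - F p) * h

variable {t}

theorem demazureLusztig_mul_X₁_mul_demazureLusztig (ht : t ≠ 0) :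
    O.demazureLusztig t * (mulUnit O.coord : Module.End ℂ (Ω → K)) * O.demazureLusztig t =
      mulUnit (O.coord ∘ O.swap) := by
  ext F p
  have h := O.coeff_add_coeff_swap t p
  have h' := O.coord_mul_coeff_add t p
  have ht' : algebraMap ℂ K t * algebraMap ℂ K t⁻¹ = 1 := by
    rw [← map_mul, mul_inv_cancel₀ ht, map_one]
  rw [map_add] at h
  simp only [Module.End.mul_apply, mulUnit_apply, demazureLusztig_apply, O.swap_swap,
    Function.comp_apply]
  simp only [Algebra.smul_def] at h' ⊢
  set τ := algebraMap ℂ K t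
  set y : K := ↑(O.coord (O.swap p))
  linear_combination -(τ * F p + O.coeff t p * (F (O.swap p) - F p)) * h' + τ * y * F p * h +
    y * F p * ht'

/-- The representation of `H_{t,q}` by difference-reflection operators on functions on an orbit. -/
def realization (ht : t ≠ 0) : DAHARealization q t (Module.End ℂ (Ω → K)) where
  T := unitOfHecke ht (O.demazureLusztig t) (O.hecke_demazureLusztig t)
  X₁ := mulUnit O.coord
  X₂ := mulUnit (O.coord ∘ O.swap)
  π := O.compRot
  hecke := O.hecke_demazureLusztig t
  T_X₁_T :=
    Units.ext (O.demazureLusztig_mul_X₁_mul_demazureLusztig ht)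
  X₁_X₂ := by
    ext F p
    exact mul_left_comm _ _ _
  π_X₂ := by
    ext F p
    simp only [Units.val_mul, Module.End.mul_apply, compRot_apply, mulUnit_apply,
      Function.comp_apply, O.coord_swap_rot]
  π_X₁ := by
    ext F p
    simp only [Module.End.mul_apply, compRot_apply, mulUnit_apply, LinearMap.smul_apply,
      Pi.smul_apply, Function.comp_apply, O.coord_rot, smul_mul_assoc]
  π_π_T := by
    ext F p
    simp only [Units.val_mul, Module.End.mul_apply, compRot_apply, unitOfHecke,
      demazureLusztig_apply, coeff_rot_rot, rot_rot_swap]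

theorem demazureLusztig_apply_of_symmetric {F : Ω → K} (hF : ∀ p, F (O.swap p) = F p) :
    O.demazureLusztig t F = t • F := by
  ext p
  rw [demazureLusztig_apply, hF, sub_self, mul_zero, add_zero, Pi.smul_apply]

theorem realization_symm_apply (ht : t ≠ 0) (F : Ω → K) (p : Ω) :
    (O.realization ht).symm F p =
      O.coeff t p * F (O.swap p) + O.coeff t (O.swap p) * F p := by
  have h := O.coeff_add_coeff_swap t p
  rw [map_add] at h
  change t⁻¹ • F p + O.demazureLusztig t F p = _
  simp only [demazureLusztig_apply, Algebra.smul_def]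
  linear_combination -F p * h

theorem realization_e_apply_of_symmetric (ht : t ≠ 0) (ht2 : t ^ 2 ≠ -1) {F : Ω → K}
    (hF : ∀ p, F (O.swap p) = F p) : (O.realization ht).e F = F := by
  have h : 1 + t ^ 2 ≠ 0 := fun h => ht2 (eq_neg_of_add_eq_zero_right h)
  rw [DAHARealization.e_eq, LinearMap.smul_apply, inv_smul_eq_iff₀ h]
  change F + t • O.demazureLusztig t F = _
  rw [O.demazureLusztig_apply_of_symmetric hF]
  module

end Operators

end RegularOrbit

section LatticeOrbit

variable {q : ℂ} {K : Type*} [Field K] [Algebra ℂ K] {x y : K}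

theorem smul_ne_smul_of_linearIndependent_pair (h : LinearIndependent ℂ ![x, y]) {a : ℂ}
    (ha : a ≠ 0) (b : ℂ) : a • x ≠ b • y := fun hab =>
  ha (LinearIndependent.pair_iff.1 h a (-b) (by rw [hab, neg_smul, add_neg_cancel])).1

/-- The point `(q^{2i} x, q^{2j} y)`, or its transpose if the flag is set, by its first
coordinate. -/
def latticeCoord (q : ℂ) (x y : K) : ℤ × ℤ × Bool → K
  | (i, _, false) => (q ^ 2) ^ i • x
  | (_, j, true) => (q ^ 2) ^ j • y

theorem latticeCoord_ne_zero (hq : q ≠ 0) (h : LinearIndependent ℂ ![x, y]) (p : ℤ × ℤ × Bool) :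
    latticeCoord q x y p ≠ 0 := by
  have hq2 (i : ℤ) : (q ^ 2) ^ i ≠ 0 := zpow_ne_zero i (pow_ne_zero 2 hq)
  match p with
  | (i, _, false) => exact smul_ne_zero (hq2 i) (h.ne_zero 0)
  | (_, j, true) => exact smul_ne_zero (hq2 j) (h.ne_zero 1)

/-- The orbit of a point with linearly independent coordinates. -/
def latticeOrbit (hq : q ≠ 0) (h : LinearIndependent ℂ ![x, y]) :
    RegularOrbit q K (ℤ × ℤ × Bool) where
  coord p := Units.mk0 (latticeCoord q x y p) (latticeCoord_ne_zero hq h p)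
  swap p := (p.1, p.2.1, !p.2.2)
  rot :=
    { toFun := fun (i, j, b) => bif b then (i + 1, j, false) else (i, j + 1, true)
      invFun := fun (i, j, b) => bif b then (i, j - 1, false) else (i - 1, j, true)
      left_inv := by rintro ⟨i, j, _ | _⟩ <;> simp
      right_inv := by rintro ⟨i, j, _ | _⟩ <;> simp }
  swap_swap p := by simp
  rot_rot_swap := by rintro ⟨i, j, _ | _⟩ <;> simp
  coord_rot := by
    rintro ⟨i, j, _ | _⟩ <;>
      simp [latticeCoord, zpow_add_one₀ (pow_ne_zero 2 hq), mul_comm, mul_smul]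
  coord_swap_rot := by
    rintro ⟨i, j, _ | _⟩ <;> rfl
  coord_ne_coord_swap := by
    have hij (i j : ℤ) : (q ^ 2) ^ i • x ≠ (q ^ 2) ^ j • y :=
      smul_ne_smul_of_linearIndependent_pair h (zpow_ne_zero i (pow_ne_zero 2 hq)) _
    rintro ⟨i, j, _ | _⟩ hp
    · exact hij i j (congrArg Units.val hp)
    · exact hij i j (congrArg Units.val hp).symm

end LatticeOrbit

section LeadingTerm

variable {K : Type*} [Zero K]

/-- A function on the lattice orbit which is symmetric, supported in `i - j ≥ -n`, and whose
restriction to the line `i - j = -n` is concentrated at `j = 0` with value `a`. -/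
structure HasLeadingTerm (n : ℕ) (a : K) (F : ℤ × ℤ × Bool → K) : Prop where
  symmetric : ∀ i j, F (i, j, true) = F (i, j, false)
  eq_zero : ∀ i j : ℤ, i + n < j → F (i, j, false) = 0
  eq_single : ∀ j, F (j - n, j, false) = if j = 0 then a else 0

/-- The function with value `a` at both points over `i = j = 0`, and `0` elsewhere. -/
def originIndicator (a : K) (p : ℤ × ℤ × Bool) : K :=
  if p.1 = 0 ∧ p.2.1 = 0 then a else 0

theorem hasLeadingTerm_originIndicator (a : K) : HasLeadingTerm 0 a (originIndicator a) where
  symmetric _ _ := rfl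
  eq_zero i j hij := if_neg (by simp only; omega)
  eq_single j := by simp [originIndicator]

theorem HasLeadingTerm.apply_eq_ite {n N : ℕ} {a : K} {F : ℤ × ℤ × Bool → K}
    (hF : HasLeadingTerm n a F) (hn : n ≤ N) (j : ℤ) :
    F (j - N, j, false) = if n = N ∧ j = 0 then a else 0 := by
  rcases hn.eq_or_lt with rfl | hn
  · simp [hF.eq_single]
  · rw [hF.eq_zero _ _ (by omega), if_neg (by omega)]

theorem mul_originIndicator {K : Type*} [MulZeroClass K] {u : ℤ × ℤ × Bool → K} {c : K}
    (hu : ∀ b, u (0, 0, b) = c) (a : K) :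
    u * originIndicator a = originIndicator (c * a) := by
  ext ⟨i, j, b⟩
  by_cases hij : i = 0 ∧ j = 0
  · obtain ⟨rfl, rfl⟩ := hij
    simp [originIndicator, hu]
  · simp [originIndicator, hij]

end LeadingTerm

section LatticeRealization

variable {q t : ℂ} {K : Type*} [Field K] [Algebra ℂ K] {x y : K} (hq : q ≠ 0) (ht : t ≠ 0)
  (h : LinearIndependent ℂ ![x, y])

/-- The factor by which `symm * π` multiplies a leading term of order `n`. -/
def leadingFactor (t : ℂ) (n : ℕ) : K :=
  (latticeOrbit hq h).coeff t (-n - 1, 0, false)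

include ht in
theorem leadingFactor_ne_zero (n : ℕ) : leadingFactor hq h t n ≠ 0 := by
  refine div_ne_zero (sub_ne_zero.2 ?_) (RegularOrbit.coord_sub_coord_swap_ne_zero _ _)
  change t • (q ^ 2) ^ (-n - 1 : ℤ) • x ≠ t⁻¹ • (q ^ 2) ^ (0 : ℤ) • y
  rw [smul_smul, smul_smul]
  exact smul_ne_smul_of_linearIndependent_pair h
    (mul_ne_zero ht (zpow_ne_zero _ (pow_ne_zero 2 hq))) _

/-- The realization of `H_{t,q}` on functions on the lattice orbit. -/
def latticeRealization : DAHARealization q t (Module.End ℂ (ℤ × ℤ × Bool → K)) :=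
  (latticeOrbit hq h).realization ht

variable {n : ℕ} {a : K} {F : ℤ × ℤ × Bool → K}

theorem HasLeadingTerm.realization_symm (hF : HasLeadingTerm n a F) (w : ℤ × ℤ × Bool → K) :
    HasLeadingTerm (n + 1) (leadingFactor hq h t n * (w (-n - 1, 0, true) * a))
      ((latticeRealization hq ht h).symm fun p => w p * F ((latticeOrbit hq h).rot p)) := by
  have hS (i j : ℤ) : (latticeRealization hq ht h).symm
      (fun p => w p * F ((latticeOrbit hq h).rot p)) (i, j, false) =
        (latticeOrbit hq h).coeff t (i, j, false) * (w (i, j, true) * F (i + 1, j, false)) +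
        (latticeOrbit hq h).coeff t (i, j, true) * (w (i, j, false) * F (i, j + 1, false)) := by
    rw [latticeRealization, RegularOrbit.realization_symm_apply, ← hF.symmetric i (j + 1)]
    rfl
  constructor
  · intro i j
    rw [latticeRealization, RegularOrbit.realization_symm_apply,
      RegularOrbit.realization_symm_apply, add_comm]
    rfl
  · intro i j hij
    push_cast at hij
    rw [hS, hF.eq_zero (i + 1) j (by omega), hF.eq_zero i (j + 1) (by omega), mul_zero, mul_zero,
      mul_zero, mul_zero, add_zero]
  · intro j
    have hj : j - ↑(n + 1) + 1 = j - (n : ℤ) := by push_cast; ring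
    rw [hS, hF.eq_zero _ (j + 1) (by omega), hj, hF.eq_single]
    split_ifs with hj₀
    · subst hj₀
      have hn : (0 - ↑(n + 1) : ℤ) = -n - 1 := by push_cast; ring
      rw [hn, mul_zero, mul_zero, add_zero, leadingFactor]
    · simp only [mul_zero, add_zero]

theorem HasLeadingTerm.symm_mul_π (hF : HasLeadingTerm n a F) :
    HasLeadingTerm (n + 1) (leadingFactor hq h t n * a)
      (((latticeRealization hq ht h).symm * (latticeRealization hq ht h).π) F) := by
  convert hF.realization_symm hq ht h 1 using 1
  · rw [Pi.one_apply, one_mul]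
  · simp only [Pi.one_apply, one_mul]
    rfl

theorem HasLeadingTerm.symm_mul_X₂_mul_π (hF : HasLeadingTerm 0 a F) :
    HasLeadingTerm 1 (leadingFactor hq h t 0 * (x * a))
      ((q ^ 2 • ((latticeRealization hq ht h).symm * (latticeRealization hq ht h).X₂ *
        (latticeRealization hq ht h).π)) F) := by
  convert hF.realization_symm hq ht h
    (fun p => q ^ 2 • ((latticeOrbit hq h).coord ((latticeOrbit hq h).swap p) : K)) using 1
  · change _ = _ * ((q ^ 2 • (q ^ 2) ^ (-(0 : ℕ) - 1 : ℤ) • x) * a)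
    rw [smul_smul, Nat.cast_zero, neg_zero, zero_sub, zpow_neg_one,
      mul_inv_cancel₀ (pow_ne_zero 2 hq), one_smul]
  · rw [LinearMap.smul_apply, Module.End.mul_apply, Module.End.mul_apply, ← map_smul]
    congr 1
    ext p
    exact (smul_mul_assoc _ _ _).symm

theorem HasLeadingTerm.symm_mul_π_pow
    (hF : HasLeadingTerm n ((∏ i ∈ Finset.range n, leadingFactor hq h t i) * a) F) (k : ℕ) :
    HasLeadingTerm (k + n) ((∏ i ∈ Finset.range (k + n), leadingFactor hq h t i) * a)
      ((((latticeRealization hq ht h).symm * (latticeRealization hq ht h).π) ^ k) F) := by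
  induction k with
  | zero => simpa only [pow_zero, zero_add, Module.End.one_apply] using hF
  | succ k ih =>
    rw [add_right_comm, Finset.prod_range_succ_comm, pow_succ', mul_assoc]
    exact ih.symm_mul_π hq ht h

theorem HasLeadingTerm.symm_mul_X₂_mul_π_pow (hF : HasLeadingTerm 0 a F) (ε : Fin 2) :
    HasLeadingTerm ε ((∏ i ∈ Finset.range ε, leadingFactor hq h t i) * (x ^ (ε : ℕ) * a))
      (((q ^ 2 • ((latticeRealization hq ht h).symm * (latticeRealization hq ht h).X₂ *
        (latticeRealization hq ht h).π)) ^ (ε : ℕ)) F) := by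
  fin_cases ε
  · simpa using hF
  · simpa using hF.symm_mul_X₂_mul_π hq ht h

theorem π_mul_π_zpow_apply (m i j : ℤ) (b : Bool) :
    (((latticeRealization hq ht h).π * (latticeRealization hq ht h).π) ^ m :
      (Module.End ℂ (ℤ × ℤ × Bool → K))ˣ).val F (i, j, b) = F (i + m, j + m, b) := by
  induction m generalizing F with
  | zero => simp
  | succ m ih =>
    rw [zpow_add_one, Units.val_mul, Module.End.mul_apply, ih, ← add_assoc, ← add_assoc]
    cases b <;> rfl
  | pred m ih =>
    rw [zpow_sub_one, Units.val_mul, Module.End.mul_apply, ih, ← add_sub_assoc, ← add_sub_assoc]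
    cases b <;> rfl

theorem X₁_mul_X₂_zpow_originIndicator (n : ℤ) (a : K) :
    (((latticeRealization hq ht h).X₁ * (latticeRealization hq ht h).X₂) ^ n :
      (Module.End ℂ (ℤ × ℤ × Bool → K))ˣ).val (originIndicator a) =
        originIndicator ((x * y) ^ n * a) := by
  change ((RegularOrbit.mulUnit _ * RegularOrbit.mulUnit _) ^ n).val _ = _
  rw [← map_mul, ← map_zpow]
  refine mul_originIndicator (fun b => ?_) a
  cases b <;> simp [latticeOrbit, latticeCoord, mul_comm]

theorem X₁_add_X₂_originIndicator (a : K) :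
    ((latticeRealization hq ht h).X₁ + (latticeRealization hq ht h).X₂ :
      Module.End ℂ (ℤ × ℤ × Bool → K)) (originIndicator a) = originIndicator ((x + y) * a) := by
  refine (add_mul _ _ (originIndicator a)).symm.trans (mul_originIndicator (fun b => ?_) a)
  cases b <;> simp [latticeOrbit, latticeCoord, add_comm]

theorem X₁_add_X₂_pow_originIndicator (b : ℕ) (a : K) :
    (((latticeRealization hq ht h).X₁ + (latticeRealization hq ht h).X₂ :
      Module.End ℂ (ℤ × ℤ × Bool → K)) ^ b) (originIndicator a) =
        originIndicator ((x + y) ^ b * a) := by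
  induction b with
  | zero => rw [pow_zero, pow_zero, one_mul, Module.End.one_apply]
  | succ b ih => rw [pow_succ', Module.End.mul_apply, ih, X₁_add_X₂_originIndicator, pow_succ',
      mul_assoc]

theorem e_originIndicator (ht2 : t ^ 2 ≠ -1) (a : K) :
    (latticeRealization hq ht h).e (originIndicator a) = originIndicator a :=
  RegularOrbit.realization_e_apply_of_symmetric _ ht ht2 fun _ => rfl

/-- The pair `(a₁ + ε, a₂)` locating the leading term of an element of the family `pbwSph`. -/
def leadingDegree (u : ℕ × ℤ × Fin 2 × ℕ × ℤ) : ℕ × ℤ :=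
  (u.1 + u.2.2.1, u.2.1)

/-- For `k = (N, A)`, the matrix coefficient of the lattice representation between the indicator of
the origin and the point at which a function with leading term of order `N`, translated by
`(-A, -A)`, takes its extremal value. -/
def leadingCoeff (k : ℕ × ℤ) : DAHA q t →ₗ[ℂ] K :=
  LinearMap.proj (-k.2 - k.1, -k.2, false) ∘ₗ LinearMap.applyₗ (originIndicator 1) ∘ₗ
    (latticeRealization hq ht h).lift.toLinearMap

theorem leadingCoeff_pbwSph (ht2 : t ^ 2 ≠ -1) {u : ℕ × ℤ × Fin 2 × ℕ × ℤ} {k : ℕ × ℤ}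
    (hu : (leadingDegree u).1 ≤ k.1) :
    leadingCoeff hq ht h k (pbwSph q t u) =
      if leadingDegree u = k then
        (∏ i ∈ Finset.range k.1, leadingFactor hq h t i) * mixedMonomial x y u.2.2
      else 0 := by
  obtain ⟨a, m, ε, b, n⟩ := u
  obtain ⟨N, A⟩ := k
  change (latticeRealization hq ht h).lift (pbwSph q t _) (originIndicator 1)
    (-A - N, -A, false) = _
  rw [DAHARealization.lift_pbwSph _ ht ht2]
  simp only [mul_assoc, Module.End.mul_apply]
  rw [e_originIndicator hq ht h ht2, X₁_mul_X₂_zpow_originIndicator,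
    X₁_add_X₂_pow_originIndicator, π_mul_π_zpow_apply]
  have hlead := HasLeadingTerm.symm_mul_π_pow hq ht h
    ((hasLeadingTerm_originIndicator ((x + y) ^ b * ((x * y) ^ n * 1))).symm_mul_X₂_mul_π_pow
      hq ht h ε) a
  have hi : -A - N + m = m - A - N := by ring
  have hj : -A + m = m - A := by ring
  rw [hi, hj]
  refine (hlead.apply_eq_ite hu (m - A)).trans
    (ite_congr (by simp only [leadingDegree, Prod.mk.injEq, sub_eq_zero]) (fun hN => ?_)
      fun _ => rfl)
  rw [(Prod.mk.inj hN).1, mixedMonomial, mul_one, mul_assoc]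

theorem linearIndepOn_leadingCoeff_pbwSph (ht2 : t ^ 2 ≠ -1)
    (hxy : LinearIndependent ℂ (mixedMonomial x y)) (k : ℕ × ℤ) :
    LinearIndepOn ℂ (fun u => leadingCoeff hq ht h k (pbwSph q t u)) {u | leadingDegree u = k} := by
  set c : K := ∏ i ∈ Finset.range k.1, leadingFactor hq h t i
  have hc : c ≠ 0 := Finset.prod_ne_zero_iff.2 fun i _ => leadingFactor_ne_zero hq ht h i
  have hinj : Set.InjOn (fun u : ℕ × ℤ × Fin 2 × ℕ × ℤ => u.2.2) {u | leadingDegree u = k} := by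
    rintro ⟨a, m, w⟩ hu ⟨a', m', w'⟩ hu' (rfl : w = w')
    obtain ⟨ha, rfl⟩ := Prod.mk.inj (hu.trans hu'.symm)
    exact Prod.ext (Nat.add_right_cancel ha) rfl
  have hmono : LinearIndepOn ℂ (fun u : ℕ × ℤ × Fin 2 × ℕ × ℤ => mixedMonomial x y u.2.2)
      {u | leadingDegree u = k} :=
    hxy.comp _ hinj.injective
  refine (hmono.map_injOn (LinearMap.mulLeft ℂ c) (mul_right_injective₀ hc).injOn).congr ?_
  intro u hu
  exact ((leadingCoeff_pbwSph hq ht h ht2 (congrArg Prod.fst hu).le).trans (if_pos hu)).symm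

end LatticeRealization

/-- The family of elements
`e(Y₁+Y₂)^{a₁}(Y₁Y₂)^{a₂}(t⁻²Y₁X₁+Y₂X₂)^{ε}(X₁+X₂)^{b₁}(X₁X₂)^{b₂}e`, with
`ε ∈ {0,1}`, `a₁, b₁ ∈ ℕ₀` and `a₂, b₂ ∈ ℤ` (negative exponents interpreted via the
inverse generators), is linearly independent over ℂ in `H_{t,q}`. -/
theorem stmt7 (q t : ℂ) (hq : q ≠ 0) (ht : t ≠ 0) (ht2 : t ^ 2 ≠ -1) :
    LinearIndependent ℂ (pbwSph q t) := by
  obtain ⟨K, _, _, x, y, hxy⟩ := exists_linearIndependent_mixedMonomial ℂ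
  have h : LinearIndependent ℂ ![x, y] := linearIndependent_pair_of_mixedMonomial hxy
  refine linearIndependent_of_blockTriangular leadingDegree Prod.fst (leadingCoeff hq ht h) ?_ ?_
  · intro u k hle hne
    rw [leadingCoeff_pbwSph hq ht h ht2 hle, if_neg hne]
  · exact linearIndepOn_leadingCoeff_pbwSph hq ht h ht2 hxy
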